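/- arXiv:math/0301017 — 4 statements merged into one kernel-verified Lean document; each statement's English description precedes it below -/
import Mathlib

section
/- Let N, M be positive integers and let f : {0,…,N−1} × {0,…,M−1} → ℂ. Define the flattened array f̃(k) = f(x,y) for k = N·y + x (0 ≤ x < N, 0 ≤ y < M), its 1-D DFT F₁(j) = Σ_{k=0}^{NM−1} exp(−2πi·j·k/(N·M))·f̃(k), and the generalized 2-D DFT at real frequencies F₂(a,b) = Σ_{y=0}^{M−1} Σ_{x=0}^{N−1} exp(−2πi·(x·a/N + y·b/M))·f(x,y) for a, b ∈ ℝ. Then for all integers u, v with 0 ≤ u < N and 0 ≤ v < M, F₁(M·u + v) = F₂(u + v/M, v). -/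
/-!
Since `j * (N * y + x) / (N * M) = x * (j / M) / N + y * j / M`, splitting the sum along
`k = N * y + x` gives `F₁(j) = F₂(j / M, j)` for every frequency `j`. For `j = M * u + v` the second
frequency reduces to `v`, because `F₂` is `M`-periodic there, while the first, whose period is `N`,
keeps the skew `u + v / M`.
-/

open Finset

/-- One-dimensional DFT of a sequence `g` of `L` samples, evaluated at frequency `j`. -/
noncomputable def dft1 (L : ℕ) (g : ℕ → ℂ) (j : ℕ) : ℂ :=
  ∑ k ∈ Finset.range L,
    Complex.exp (-2 * Real.pi * Complex.I * (((j : ℝ) * k) / L : ℝ)) * g k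

/-- Generalized two-dimensional DFT of an `N × M` array `f`
at real frequencies `(a, b)`. -/
noncomputable def dft2 (N M : ℕ) (f : ℕ → ℕ → ℂ) (a b : ℝ) : ℂ :=
  ∑ y ∈ Finset.range M, ∑ x ∈ Finset.range N,
    Complex.exp (-2 * Real.pi * Complex.I * (((x : ℝ) * a / N + (y : ℝ) * b / M) : ℝ)) * f x y

theorem sum_range_mul {A : Type*} [AddCommMonoid A] (N M : ℕ) (g : ℕ → A) :
    ∑ k ∈ range (N * M), g k = ∑ y ∈ range M, ∑ x ∈ range N, g (N * y + x) := by
  induction M with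
  | zero => simp
  | succ M ih => rw [Nat.mul_succ, sum_range_add, ih, sum_range_succ]

theorem exp_neg_two_pi_I_mul_periodic :
    Function.Periodic (fun t : ℝ => Complex.exp (-2 * Real.pi * Complex.I * t)) 1 := by
  intro t
  have phase_shift : -2 * Real.pi * Complex.I * (t + 1 : ℝ)
      = -2 * Real.pi * Complex.I * t - 2 * Real.pi * Complex.I := by
    push_cast
    ring
  exact (congrArg Complex.exp phase_shift).trans (Complex.exp_periodic.sub_eq _)

theorem dft2_periodic_right (N M : ℕ) (f : ℕ → ℕ → ℂ) (a : ℝ) :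
    Function.Periodic (dft2 N M f a) M := by
  intro b
  refine sum_congr rfl fun y hy => sum_congr rfl fun x _ => ?_
  have hM : (M : ℝ) ≠ 0 := Nat.cast_ne_zero.mpr (Nat.ne_zero_of_lt (mem_range.mp hy))
  have phase_shift : (x : ℝ) * a / N + y * (b + M) / M = x * a / N + y * b / M + y * 1 := by
    field_simp
    ring
  rw [phase_shift]
  exact congrArg (· * f x y) (exp_neg_two_pi_I_mul_periodic.nat_mul y _)

theorem dft1_flatten_eq_dft2 (N M : ℕ) (f : ℕ → ℕ → ℂ) (j : ℕ) :
    dft1 (N * M) (fun k => f (k % N) (k / N)) j = dft2 N M f (j / M) j := by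
  rw [dft1, sum_range_mul]
  refine sum_congr rfl fun y _ => sum_congr rfl fun x hx => ?_
  have hxN : x < N := mem_range.mp hx
  have hN : 0 < N := Nat.zero_lt_of_lt hxN
  have column : (N * y + x) % N = x := by rw [Nat.mul_add_mod, Nat.mod_eq_of_lt hxN]
  have row : (N * y + x) / N = y := by
    rw [Nat.mul_add_div hN, Nat.div_eq_of_lt hxN, add_zero]
  have phase : (j : ℝ) * (N * y + x : ℕ) / (N * M : ℕ) = x * (j / M) / N + y * j / M := by
    push_cast
    field_simp
    ring
  rw [column, row, phase]

theorem one_dim_dft_eq_skewed_two_dim_dft_general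
    (N M : ℕ) (hM : 0 < M) (f : ℕ → ℕ → ℂ) (u v : ℕ) :
    dft1 (N * M) (fun k => f (k % N) (k / N)) (M * u + v)
      = dft2 N M f ((u : ℝ) + (v : ℝ) / M) (v : ℝ) := by
  have hM' : (M : ℝ) ≠ 0 := Nat.cast_ne_zero.mpr hM.ne'
  have skew : ((M * u + v : ℕ) : ℝ) / M = u + v / M := by
    push_cast
    field_simp
  have shift : ((M * u + v : ℕ) : ℝ) = v + u * M := by
    push_cast
    ring
  calc dft1 (N * M) (fun k => f (k % N) (k / N)) (M * u + v)
      = dft2 N M f ((M * u + v : ℕ) / M) (M * u + v : ℕ) := dft1_flatten_eq_dft2 N M f _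
    _ = dft2 N M f (u + v / M) (v + u * M) := by rw [skew, shift]
    _ = dft2 N M f (u + v / M) v := (dft2_periodic_right N M f _).nat_mul u v

/-- Eq. (2.8): the single 1-D DFT of the row-major flattened array
`f̃(k) = f(k % N, k / N)` (so `f̃(N·y + x) = f(x, y)`), evaluated at the
index-reversed frequency `j = M·u + v`, equals the 2-D DFT of `f` sampled on the
skewed grid `(u + v/M, v)`. -/
theorem one_dim_dft_eq_skewed_two_dim_dft
    (N M : ℕ) (hN : 0 < N) (hM : 0 < M) (f : ℕ → ℕ → ℂ)
    (u v : ℕ) (hu : u < N) (hv : v < M) :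
    dft1 (N * M) (fun k => f (k % N) (k / N)) (M * u + v)
      = dft2 N M f ((u : ℝ) + (v : ℝ) / M) (v : ℝ) :=
  one_dim_dft_eq_skewed_two_dim_dft_general N M hM f u v
end

section
/- Let N, M be positive integers and let f : {0,…,N−1} × {0,…,M−1} → ℂ. Define the generalized 2-D DFT at real frequencies F₂(a,b) = Σ_{y=0}^{M−1} Σ_{x=0}^{N−1} exp(−2πi·(x·a/N + y·b/M))·f(x,y) for a, b ∈ ℝ. Then for all integers x, y with 0 ≤ x < N, 0 ≤ y < M, f(x,y) = (1/(N·M)) · Σ_{u=0}^{N−1} Σ_{v=0}^{M−1} exp(+2πi·(N·y + x)·(M·u + v)/(N·M)) · F₂(u + v/M, v). That is, the 1-D inverse DFT applied to the skewed 2-D frequency samples restores the spatial data. -/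
/-!
The skew turns the 2-D transform of `f` into the 1-D transform of the flattening of `f`: for the
spatial index `k = N y + x` and the frequency index `j = M u + v`,
`k j / (N M) = (x (u + v / M) / N + y v / M) + u y`,
so the 1-D phase exceeds the 2-D phase by the integer `u y`, which the exponential does not see.
Fourier inversion on `ℤ / N M` then recovers `f`, since `j` runs once through all residues.
-/

open Finset

section Reindexing

variable {A : Type*} [AddCommMonoid A]

lemma sum_range_mul_eq_sum_sum (m n : ℕ) (g : ℕ → A) :
    ∑ k ∈ range (m * n), g k = ∑ i ∈ range m, ∑ j ∈ range n, g (n * i + j) := by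
  induction m with
  | zero => simp
  | succ m ih => rw [Nat.succ_mul, sum_range_add, ih, sum_range_succ, Nat.mul_comm m n]

lemma sum_zmod_eq_sum_range {n : ℕ} [NeZero n] (g : ZMod n → A) :
    ∑ k, g k = ∑ k ∈ range n, g k :=
  sum_nbij' ZMod.val Nat.cast (fun k _ ↦ mem_range.2 k.val_lt) (fun _ _ ↦ mem_univ _)
    (fun k _ ↦ k.natCast_zmod_val) (fun _ hk ↦ ZMod.val_cast_of_lt (mem_range.1 hk))
    (fun k _ ↦ by rw [k.natCast_zmod_val])

end Reindexing

section OneDimensional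

variable {n : ℕ} [NeZero n] {E : Type*} [AddCommGroup E] [Module ℂ E]

lemma zmod_dft_intCast_eq_sum_range (Φ : ZMod n → E) (j : ℤ) :
    ZMod.dft Φ j =
      ∑ k ∈ range n, Complex.exp (2 * Real.pi * Complex.I * (-(k * j : ℂ) / n)) • Φ k := by
  rw [ZMod.dft_apply, sum_zmod_eq_sum_range]
  refine sum_congr rfl fun k _ ↦ ?_
  have hchar := ZMod.stdAddChar_coe (N := n) (-(k * j))
  push_cast at hchar
  rw [hchar, mul_div_assoc]

lemma zmod_intCast_eq_sum_range_dft (Φ : ZMod n → E) (k : ℤ) :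
    Φ k = (n : ℂ)⁻¹ •
      ∑ j ∈ range n, Complex.exp (2 * Real.pi * Complex.I * ((k * j : ℂ) / n)) • ZMod.dft Φ j := by
  conv_lhs => rw [← ZMod.dft.symm_apply_apply Φ]
  rw [ZMod.invDFT_apply, sum_zmod_eq_sum_range]
  refine congrArg _ (sum_congr rfl fun j _ ↦ ?_)
  have hchar := ZMod.stdAddChar_coe (N := n) (k * j)
  push_cast at hchar
  rw [mul_comm (j : ZMod n), hchar, mul_div_assoc]

end OneDimensional

/-- The row-major flattening of an `N × M` array into a signal on `ℤ / N M`, whose sample at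
`N * y + x` is `f x y`. -/
def rowMajor {α : Type*} (N M : ℕ) (f : ℕ → ℕ → α) (k : ZMod (N * M)) : α :=
  f (k.val % N) (k.val / N)

lemma rowMajor_natCast {α : Type*} {N M x y : ℕ} (f : ℕ → ℕ → α) (hx : x < N) (hy : y < M) :
    rowMajor N M f ((N * y + x : ℕ) : ZMod (N * M)) = f x y := by
  have hlt : N * y + x < N * M := by nlinarith
  have hdiv : (N * y + x) / N = y := by
    rw [Nat.mul_add_div (by lia), Nat.div_eq_of_lt hx, Nat.add_zero]
  have hmod : (N * y + x) % N = x := by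
    rw [Nat.mul_add_mod, Nat.mod_eq_of_lt hx]
  rw [rowMajor, ZMod.val_cast_of_lt hlt, hmod, hdiv]

lemma exp_skewed_phase {N M : ℝ} (hN : N ≠ 0) (hM : M ≠ 0) (x v : ℝ) (y u : ℤ) :
    Complex.exp (-2 * Real.pi * Complex.I * (x * (u + v / M) / N + y * v / M : ℝ)) =
      Complex.exp (2 * Real.pi * Complex.I * (-((N * y + x) * (M * u + v)) / (N * M) : ℝ)) := by
  rw [Complex.exp_eq_exp_iff_exists_int]
  refine ⟨u * y, ?_⟩
  have hN' : (N : ℂ) ≠ 0 := Complex.ofReal_ne_zero.2 hN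
  have hM' : (M : ℂ) ≠ 0 := Complex.ofReal_ne_zero.2 hM
  push_cast
  field_simp
  ring

theorem dft2_skewed_eq_dft_rowMajor (N M : ℕ) [NeZero (N * M)] (f : ℕ → ℕ → ℂ) (u v : ℤ) :
    dft2 N M f ((u : ℝ) + (v : ℝ) / M) v =
      ZMod.dft (rowMajor N M f) ((M * u + v : ℤ) : ZMod (N * M)) := by
  obtain ⟨hN, hM⟩ := mul_ne_zero_iff.1 (NeZero.ne (N * M))
  have hrange : range (N * M) = range (M * N) := congrArg range (Nat.mul_comm N M)
  rw [zmod_dft_intCast_eq_sum_range, hrange, sum_range_mul_eq_sum_sum, dft2]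
  refine sum_congr rfl fun y hy ↦ sum_congr rfl fun x hx ↦ ?_
  have hphase := exp_skewed_phase (Nat.cast_ne_zero.2 hN) (Nat.cast_ne_zero.2 hM) x v y u
  rw [rowMajor_natCast f (mem_range.1 hx) (mem_range.1 hy), smul_eq_mul]
  push_cast at hphase ⊢
  rw [hphase]

/-- Section 4, "Un-Orthogonality", 2-D case: the 1-D inverse DFT
applied to the 2-D frequency data sampled on the skewed grid `(u + v/M, v)`
restores the spatial samples `f(x, y)` exactly. -/
theorem inverse_one_dim_dft_of_skewed_two_dim_dft
    (N M : ℕ) (hN : 0 < N) (hM : 0 < M) (f : ℕ → ℕ → ℂ)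
    (x y : ℕ) (hx : x < N) (hy : y < M) :
    f x y = (1 / ((N : ℂ) * M)) *
      ∑ u ∈ Finset.range N, ∑ v ∈ Finset.range M,
        Complex.exp (2 * Real.pi * Complex.I *
            ((((N * y + x) * (M * u + v) : ℕ) : ℝ) / ((N : ℝ) * M) : ℝ)) *
          dft2 N M f ((u : ℝ) + (v : ℝ) / M) (v : ℝ) := by
  have : NeZero (N * M) := ⟨(Nat.mul_pos hN hM).ne'⟩
  have hinv := zmod_intCast_eq_sum_range_dft (rowMajor N M f) (N * y + x : ℕ)
  rw [Int.cast_natCast, rowMajor_natCast f hx hy, sum_range_mul_eq_sum_sum] at hinv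
  rw [hinv, smul_eq_mul, one_div, Nat.cast_mul]
  refine congrArg _ (sum_congr rfl fun u _ ↦ sum_congr rfl fun v _ ↦ ?_)
  have hskew := dft2_skewed_eq_dft_rowMajor N M f u v
  push_cast at hskew ⊢
  rw [hskew, smul_eq_mul]
end

section
/- Let m ≥ 1 and let N₁, …, N_m be positive integers with Q = N₁·N₂···N_m. Let x₁, …, x_m and u₁, …, u_m be integers with 0 ≤ x_i < N_i and 0 ≤ u_i < N_i for every i. Set z = Σ_{i=1}^{m} x_i · (N₁···N_{i−1}) (empty product = 1) and w = Σ_{k=1}^{m} u_k · (N_{k+1}···N_m) (empty product = 1). Define α_m = 0 and, for 1 ≤ i < m, α_i = Σ_{k=i+1}^{m} u_k / (N_{i+1}·N_{i+2}···N_k). Then z·w/Q − Σ_{i=1}^{m} (x_i/N_i)·(u_i + α_i) is an integer; consequently exp(−2πi·z·w/Q) = exp(−2πi·Σ_{i=1}^{m} (x_i/N_i)·(u_i + α_i)). -/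
open Finset

/-- The total number of samples `Q = N₁·N₂···N_m`. -/
def mQ (m : ℕ) (N : Fin m → ℕ) : ℕ := ∏ i, N i

/-- The mixed-radix flattening index `z = Σᵢ xᵢ · (N₁···N_{i−1})`
(with `x₁` the fastest-changing digit; empty product = 1). -/
def mflatten (m : ℕ) (N : Fin m → ℕ) (x : Fin m → ℕ) : ℕ :=
  ∑ i, x i * ∏ j ∈ Finset.univ.filter (fun j => j < i), N j

/-- The digit-order-reversed mixed-radix flattening
`w = Σ_k u_k · (N_{k+1}···N_m)` (empty product = 1). -/
def mrev (m : ℕ) (N : Fin m → ℕ) (u : Fin m → ℕ) : ℕ :=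
  ∑ k, u k * ∏ h ∈ Finset.univ.filter (fun h => k < h), N h

/-- The skew offsets `αᵢ = Σ_{k=i+1}^{m} u_k / (N_{i+1}·N_{i+2}···N_k)`
(so `α_m = 0`, the sum being empty). -/
noncomputable def malpha (m : ℕ) (N : Fin m → ℕ) (u : Fin m → ℕ) (i : Fin m) : ℝ :=
  ∑ k ∈ Finset.univ.filter (fun k => i < k),
    (u k : ℝ) / ∏ h ∈ Finset.univ.filter (fun h => i < h ∧ h ≤ k), (N h : ℝ)

/-!
With `Pᵢ = ∏_{j<i} N_j` and `R_k = ∏_{h>k} N_h`, the quotient `z·w/Q` is the double sum of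
`xᵢ·u_k·(Pᵢ·R_k/Q)`. For `k < i` the ranges `h < i` and `k < h` cover every index, so `Q` divides
`Pᵢ·R_k` and these terms are integers. For `i ≤ k` the weight is `1/(Nᵢ·N_{i+1}···N_k)`; pulling
out `xᵢ/Nᵢ` leaves `uᵢ` at `k = i` and the skew offset `αᵢ` from `k > i`.
-/

section IntervalProducts

variable {ι M : Type*} [LinearOrder ι] [CommMonoid M]

@[to_additive]
lemma prod_Iio_mul_prod_Ici [Fintype ι] [LocallyFiniteOrderTop ι] [LocallyFiniteOrderBot ι]
    (f : ι → M) (i : ι) : (∏ j ∈ Iio i, f j) * ∏ j ∈ Ici i, f j = ∏ j, f j := by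
  rw [← filter_gt_eq_Iio, ← filter_le_eq_Ici]
  simpa only [not_lt] using prod_filter_mul_prod_filter_not univ (· < i) f

variable [LocallyFiniteOrder ι] [LocallyFiniteOrderTop ι]

lemma prod_Icc_mul_prod_Ioi (f : ι → M) {i k : ι} (hik : i ≤ k) :
    (∏ j ∈ Icc i k, f j) * ∏ j ∈ Ioi k, f j = ∏ j ∈ Ici i, f j := by
  have hdisj : Disjoint (Icc i k) (Ioi k) :=
    disjoint_left.mpr fun _ hIcc hIoi ↦ (mem_Icc.mp hIcc).2.not_gt (mem_Ioi.mp hIoi)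
  have hunion : Icc i k ∪ Ioi k = Ici i := by
    rw [← coe_inj]
    simpa only [coe_union, coe_Icc, coe_Ioi, coe_Ici] using Set.Icc_union_Ioi_eq_Ici hik
  rw [← prod_union hdisj, hunion]

lemma prod_Ioo_mul_prod_Ici (f : ι → M) {k i : ι} (hki : k < i) :
    (∏ j ∈ Ioo k i, f j) * ∏ j ∈ Ici i, f j = ∏ j ∈ Ioi k, f j := by
  have hdisj : Disjoint (Ioo k i) (Ici i) :=
    disjoint_left.mpr fun _ hIoo hIci ↦ (mem_Ioo.mp hIoo).2.not_ge (mem_Ici.mp hIci)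
  have hunion : Ioo k i ∪ Ici i = Ioi k := by
    rw [← coe_inj]
    simpa only [coe_union, coe_Ioo, coe_Ici, coe_Ioi] using Set.Ioo_union_Ici_eq_Ioi hki
  rw [← prod_union hdisj, hunion]

end IntervalProducts

section Weights

variable {ι G : Type*} [Fintype ι] [LinearOrder ι] [LocallyFiniteOrder ι]
  [LocallyFiniteOrderTop ι] [LocallyFiniteOrderBot ι] [CommGroupWithZero G]
  {N : ι → G} {i k : ι}

lemma prod_Iio_mul_prod_Ioi_div_prod_of_le (hN : ∀ j, N j ≠ 0) (hik : i ≤ k) :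
    (∏ j ∈ Iio i, N j) * (∏ j ∈ Ioi k, N j) / ∏ j, N j = (∏ j ∈ Icc i k, N j)⁻¹ := by
  have hIcc : ∏ j ∈ Icc i k, N j ≠ 0 := prod_ne_zero_iff.mpr fun j _ ↦ hN j
  have hQ : ∏ j, N j ≠ 0 := prod_ne_zero_iff.mpr fun j _ ↦ hN j
  rw [div_eq_iff hQ, eq_inv_mul_iff_mul_eq₀ hIcc, mul_left_comm, prod_Icc_mul_prod_Ioi N hik,
    prod_Iio_mul_prod_Ici]

lemma prod_Iio_mul_prod_Ioi_div_prod_of_lt (hN : ∀ j, N j ≠ 0) (hki : k < i) :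
    (∏ j ∈ Iio i, N j) * (∏ j ∈ Ioi k, N j) / ∏ j, N j = ∏ j ∈ Ioo k i, N j := by
  have hQ : ∏ j, N j ≠ 0 := prod_ne_zero_iff.mpr fun j _ ↦ hN j
  rw [div_eq_iff hQ, ← prod_Ioo_mul_prod_Ici N hki, mul_left_comm, prod_Iio_mul_prod_Ici]

end Weights

section MixedRadix

variable {ι : Type*} [LinearOrder ι]

/-- The mixed-radix number with radices `N` and digits `x`, the least index changing fastest; it
extends `mflatten` to any finite linear order of indices and any coefficients. -/
def mixedRadix {R : Type*} [CommSemiring R] [Fintype ι] [LocallyFiniteOrderBot ι]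
    (N x : ι → R) : R :=
  ∑ i, x i * ∏ j ∈ Iio i, N j

/-- The mixed-radix number with radices `N` and digits `u`, the greatest index changing fastest; it
extends `mrev` in the way `mixedRadix` extends `mflatten`. -/
def mixedRadixRev {R : Type*} [CommSemiring R] [Fintype ι] [LocallyFiniteOrderTop ι]
    (N u : ι → R) : R :=
  ∑ k, u k * ∏ h ∈ Ioi k, N h

/-- The skew offset `αᵢ`; it extends `malpha` to any linear order of indices with finite upper rays
and any coefficients. -/
def skewOffset {K : Type*} [Semifield K] [LocallyFiniteOrder ι] [LocallyFiniteOrderTop ι]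
    (N u : ι → K) (i : ι) : K :=
  ∑ k ∈ Ioi i, u k / ∏ h ∈ Ioc i k, N h

variable {K : Type*} [Semifield K] [LocallyFiniteOrder ι] [LocallyFiniteOrderTop ι]

lemma sum_Ici_div_prod_Icc (N u : ι → K) (i : ι) :
    ∑ k ∈ Ici i, u k / ∏ h ∈ Icc i k, N h = (u i + skewOffset N u i) / N i := by
  rw [← add_sum_Ioi_eq_sum_Ici, Icc_self, prod_singleton, skewOffset, add_div, sum_div]
  congr 1
  refine sum_congr rfl fun k hk ↦ ?_
  rw [← mul_prod_Ioc_eq_prod_Icc (mem_Ioi.mp hk).le, mul_comm, div_mul_eq_div_div]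

variable [Fintype ι] [LocallyFiniteOrderBot ι]

lemma prod_Iio_mul_mixedRadixRev_div_prod {N : ι → K} (hN : ∀ j, N j ≠ 0) (u : ι → K) (i : ι) :
    (∏ j ∈ Iio i, N j) * mixedRadixRev N u / ∏ j, N j
      = (u i + skewOffset N u i) / N i + ∑ k ∈ Iio i, u k * ∏ h ∈ Ioo k i, N h := by
  let weight (k : ι) : K := (∏ j ∈ Iio i, N j) * (∏ h ∈ Ioi k, N h) / ∏ j, N j
  have hge : ∑ k ∈ Ici i, u k * weight k = (u i + skewOffset N u i) / N i := by
    rw [← sum_Ici_div_prod_Icc]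
    refine sum_congr rfl fun k hk ↦ ?_
    rw [div_eq_mul_inv, ← prod_Iio_mul_prod_Ioi_div_prod_of_le hN (mem_Ici.mp hk)]
  have hlt : ∑ k ∈ Iio i, u k * weight k = ∑ k ∈ Iio i, u k * ∏ h ∈ Ioo k i, N h :=
    sum_congr rfl fun k hk ↦ by
      rw [← prod_Iio_mul_prod_Ioi_div_prod_of_lt hN (mem_Iio.mp hk)]
  calc (∏ j ∈ Iio i, N j) * mixedRadixRev N u / ∏ j, N j
      = ∑ k, u k * weight k := by
        rw [mixedRadixRev, mul_sum, sum_div]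
        exact sum_congr rfl fun k _ ↦ by rw [mul_left_comm, mul_div_assoc]
    _ = ∑ k ∈ Ici i, u k * weight k + ∑ k ∈ Iio i, u k * weight k := by
        rw [add_comm, sum_Iio_add_sum_Ici]
    _ = _ := by rw [hge, hlt]

lemma mixedRadix_mul_mixedRadixRev_div_prod {N : ι → K} (hN : ∀ j, N j ≠ 0) (x u : ι → K) :
    mixedRadix N x * mixedRadixRev N u / ∏ j, N j
      = ∑ i, x i / N i * (u i + skewOffset N u i)
        + ∑ i, x i * ∑ k ∈ Iio i, u k * ∏ h ∈ Ioo k i, N h := by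
  rw [mixedRadix, sum_mul, sum_div, ← sum_add_distrib]
  refine sum_congr rfl fun i _ ↦ ?_
  rw [mul_assoc, mul_div_assoc, prod_Iio_mul_mixedRadixRev_div_prod hN, mul_add,
    div_mul_eq_mul_div, mul_div_assoc]

end MixedRadix

lemma exp_neg_two_pi_I_mul_eq_of_sub_eq_int {a b : ℂ} {n : ℤ} (h : a - b = n) :
    Complex.exp (-2 * Real.pi * Complex.I * a) = Complex.exp (-2 * Real.pi * Complex.I * b) := by
  refine Complex.exp_eq_exp_iff_exists_int.mpr ⟨-n, ?_⟩
  rw [Int.cast_neg, ← h]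
  ring

theorem multi_dim_exponent_identity_general {ι : Type*} [Fintype ι] [LinearOrder ι]
    [LocallyFiniteOrder ι] [LocallyFiniteOrderTop ι] [LocallyFiniteOrderBot ι]
    (N : ι → ℤ) (hN : ∀ i, N i ≠ 0) (x u : ι → ℤ) :
    let Nℝ : ι → ℝ := fun i ↦ N i
    let phase : ℝ := mixedRadix Nℝ (fun i ↦ x i) * mixedRadixRev Nℝ (fun i ↦ u i) / ∏ i, Nℝ i
    let skewPhase : ℝ := ∑ i, x i / Nℝ i * (u i + skewOffset Nℝ (fun k ↦ u k) i)
    (∃ n : ℤ, phase - skewPhase = n)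
    ∧ Complex.exp (-2 * Real.pi * Complex.I * phase)
      = Complex.exp (-2 * Real.pi * Complex.I * skewPhase) := by
  intro Nℝ phase skewPhase
  have hNℝ (i : ι) : Nℝ i ≠ 0 := Int.cast_ne_zero.mpr (hN i)
  obtain ⟨n, hn⟩ : ∃ n : ℤ, phase - skewPhase = n := by
    refine ⟨∑ i, x i * ∑ k ∈ Iio i, u k * ∏ h ∈ Ioo k i, N h, ?_⟩
    rw [sub_eq_iff_eq_add']
    push_cast
    exact mixedRadix_mul_mixedRadixRev_div_prod hNℝ _ _
  exact ⟨⟨n, hn⟩, exp_neg_two_pi_I_mul_eq_of_sub_eq_int (n := n) (by exact_mod_cast hn)⟩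

lemma natCast_mflatten {R : Type*} [CommSemiring R] (m : ℕ) (N x : Fin m → ℕ) :
    (mflatten m N x : R) = mixedRadix (fun i ↦ (N i : R)) (fun i ↦ (x i : R)) := by
  simp only [mflatten, mixedRadix, filter_gt_eq_Iio, Nat.cast_sum, Nat.cast_mul, Nat.cast_prod]

lemma natCast_mrev {R : Type*} [CommSemiring R] (m : ℕ) (N u : Fin m → ℕ) :
    (mrev m N u : R) = mixedRadixRev (fun i ↦ (N i : R)) (fun i ↦ (u i : R)) := by
  simp only [mrev, mixedRadixRev, filter_lt_eq_Ioi, Nat.cast_sum, Nat.cast_mul, Nat.cast_prod]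

lemma malpha_eq_skewOffset (m : ℕ) (N u : Fin m → ℕ) (i : Fin m) :
    malpha m N u i = skewOffset (fun j ↦ (N j : ℝ)) (fun j ↦ (u j : ℝ)) i := by
  simp only [malpha, skewOffset, filter_lt_eq_Ioi, filter_lt_le_eq_Ioc]

/-- Eqs. (3.6)–(3.8): `z·w/Q − Σᵢ (xᵢ/Nᵢ)·(uᵢ + αᵢ)` is an
integer, hence the corresponding DFT kernel exponentials agree. -/
theorem multi_dim_exponent_identity
    (m : ℕ) (hm : 1 ≤ m) (N : Fin m → ℕ) (hN : ∀ i, 0 < N i)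
    (x u : Fin m → ℕ) (hx : ∀ i, x i < N i) (hu : ∀ i, u i < N i) :
    (∃ n : ℤ,
      ((mflatten m N x * mrev m N u : ℕ) : ℝ) / (mQ m N : ℝ)
        - ∑ i, (x i : ℝ) / (N i : ℝ) * ((u i : ℝ) + malpha m N u i) = (n : ℝ))
    ∧ Complex.exp (-2 * Real.pi * Complex.I *
          (((mflatten m N x * mrev m N u : ℕ) : ℝ) / (mQ m N : ℝ) : ℝ))
      = Complex.exp (-2 * Real.pi * Complex.I *
          ((∑ i, (x i : ℝ) / (N i : ℝ) * ((u i : ℝ) + malpha m N u i)) : ℝ)) := by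
  simpa only [Nat.cast_mul, natCast_mflatten, natCast_mrev, malpha_eq_skewOffset, mQ,
    Nat.cast_prod, Int.cast_natCast] using
    multi_dim_exponent_identity_general (fun i ↦ N i) (fun i ↦ mod_cast (hN i).ne')
      (fun i ↦ x i) (fun i ↦ u i)
end

section
/- Let m ≥ 1 and let N₁, …, N_m be positive integers with Q = N₁·N₂···N_m. Let f be a complex-valued function of multi-indices (x₁,…,x_m) with 0 ≤ x_i < N_i, and define the generalized m-dimensional DFT at real frequencies F_m(a₁,…,a_m) = Σ_{x_m=0}^{N_m−1} ⋯ Σ_{x₁=0}^{N₁−1} exp(−2πi·Σ_{i=1}^{m} x_i·a_i/N_i)·f(x₁,…,x_m) for real a₁,…,a_m. Then for all multi-indices (x₁,…,x_m) with 0 ≤ x_i < N_i, writing z = Σ_{i=1}^{m} x_i·(N₁···N_{i−1}), one has f(x₁,…,x_m) = (1/Q) · Σ over all (u₁,…,u_m) with 0 ≤ u_k < N_k of exp(+2πi·z·w/Q) · F_m(u₁+α₁, …, u_{m−1}+α_{m−1}, u_m), where w = Σ_{k=1}^{m} u_k·(N_{k+1}···N_m), α_m = 0 and α_i = Σ_{k=i+1}^{m}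 u_k/(N_{i+1}···N_k) for i < m. -/
/-!
Flatten `f` along `z` to a function `Φ` on `ℤ/Q`. At the skewed frequencies the `m`-dimensional
transform of `f` is the one-dimensional transform `𝓕 Φ`, because

`N₁ ⋯ N_{i-1} · w / Q ≡ (u_i + α_i) / N_i  (mod 1)`.

Indeed, in the expansion of `w` the digits `u_k` with `k < i` contribute integers to the left-hand
side and those with `k ≥ i` contribute the terms of the right-hand side. Multiplying by `x_i` and
summing over `i` gives `Σ x_i (u_i + α_i) / N_i ≡ z w / Q`, so `F_m` at the skewed frequency of `u`
is `𝓕 Φ w`. Both `z` and `w` run once through `ℤ/Q`, so the claim is Fourier inversion there.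
-/

open Finset

/-- Generalized `m`-dimensional DFT of the array `f` at real frequencies
`a = (a₁,…,a_m)`: the sum over all multi-indices `(x₁,…,x_m)` with `0 ≤ xᵢ < Nᵢ`. -/
noncomputable def mdft (m : ℕ) (N : Fin m → ℕ) (f : (Fin m → ℕ) → ℂ)
    (a : Fin m → ℝ) : ℂ :=
  ∑ x ∈ Fintype.piFinset (fun i => Finset.range (N i)),
    Complex.exp (-2 * Real.pi * Complex.I * ((∑ i, (x i : ℝ) * a i / (N i : ℝ)) : ℝ)) * f x

open scoped ZMod

section LinearOrder

variable {ι M : Type*} [Fintype ι] [LinearOrder ι] [CommMonoid M]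

@[to_additive]
lemma prod_lt_mul_self_mul_prod_gt (N : ι → M) (i : ι) :
    (∏ j with j < i, N j) * (N i * ∏ j with i < j, N j) = ∏ j, N j := by
  have not_lt_eq_insert : ({j | ¬ j < i} : Finset ι) = insert i ({j | i < j} : Finset ι) := by
    ext j
    simp [le_iff_eq_or_lt, eq_comm]
  rw [← prod_filter_mul_prod_filter_not univ (· < i), not_lt_eq_insert, prod_insert (by simp)]

lemma prod_lt_le_mul_prod_gt (N : ι → M) {i k : ι} (hik : i ≤ k) :
    (∏ j with i < j ∧ j ≤ k, N j) * ∏ j with k < j, N j = ∏ j with i < j, N j := by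
  rw [← prod_filter_mul_prod_filter_not ({j | i < j} : Finset ι) (· ≤ k), filter_filter,
    filter_filter]
  congr 2
  ext j
  simpa using hik.trans_lt

lemma prod_dvd_prod_lt_mul_prod_gt (N : ι → M) {i k : ι} (hki : k < i) :
    ∏ j, N j ∣ (∏ j with j < i, N j) * ∏ j with k < j, N j := by
  simp only [prod_filter, ← prod_mul_distrib]
  refine prod_dvd_prod_of_dvd _ _ fun j _ => ?_
  rcases lt_or_ge j i with hji | hij
  · rw [if_pos hji]
    exact dvd_mul_right _ _
  · rw [if_pos (hki.trans_le hij)]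
    exact dvd_mul_left _ _

end LinearOrder

section MixedRadix

variable {m : ℕ} (N : Fin m → ℕ)

lemma mflatten_coe_eq_finPiFinEquiv (d : ∀ i, Fin (N i)) :
    mflatten m N (fun i => d i) = finPiFinEquiv d := by
  have filter_lt_eq_map (i : Fin m) : ({j | j < i} : Finset (Fin m)) =
      univ.map (Fin.castLEEmb i.is_lt.le) := by
    ext j
    simp only [mem_filter_univ, mem_map, mem_univ, true_and, Fin.castLEEmb_apply]
    exact ⟨fun hji => ⟨⟨j, hji⟩, rfl⟩, fun ⟨a, ha⟩ => ha ▸ a.is_lt⟩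
  simp only [finPiFinEquiv_apply, mflatten, filter_lt_eq_map, prod_map, Fin.castLEEmb_apply]

lemma bijOn_mflatten :
    Set.BijOn (mflatten m N) (Fintype.piFinset fun i => range (N i)) (range (mQ m N)) := by
  have exists_digits {x : Fin m → ℕ} (hx : x ∈ Fintype.piFinset fun i => range (N i)) :
      ∃ d : ∀ i, Fin (N i), (fun i => (d i : ℕ)) = x :=
    ⟨fun i => ⟨x i, mem_range.1 (Fintype.mem_piFinset.1 hx i)⟩, rfl⟩
  refine ⟨fun x hx => ?_, fun x hx y hy hxy => ?_, fun z hz => ?_⟩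
  · obtain ⟨d, rfl⟩ := exists_digits hx
    rw [mflatten_coe_eq_finPiFinEquiv]
    exact mem_coe.2 (mem_range.2 (finPiFinEquiv d).isLt)
  · obtain ⟨d, rfl⟩ := exists_digits hx
    obtain ⟨e, rfl⟩ := exists_digits hy
    rw [mflatten_coe_eq_finPiFinEquiv, mflatten_coe_eq_finPiFinEquiv, ← Fin.ext_iff] at hxy
    rw [finPiFinEquiv.injective hxy]
  · refine ⟨fun i => finPiFinEquiv.symm ⟨z, mem_range.1 hz⟩ i, by simp, ?_⟩
    rw [mflatten_coe_eq_finPiFinEquiv, Equiv.apply_symm_apply]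

lemma mrev_eq_mflatten_rev (u : Fin m → ℕ) :
    mrev m N u = mflatten m (N ∘ Fin.rev) (u ∘ Fin.rev) := by
  rw [mrev, mflatten, ← Equiv.sum_comp Fin.revPerm]
  refine sum_congr rfl fun k _ => congrArg _ ?_
  simp only [filter_lt_eq_Ioi, filter_gt_eq_Iio, Fin.revPerm_apply, ← Fin.map_revPerm_Iio, prod_map,
    Equiv.coe_toEmbedding, Function.comp_apply]

lemma bijOn_mrev :
    Set.BijOn (mrev m N) (Fintype.piFinset fun i => range (N i)) (range (mQ m N)) := by
  have mQ_rev : mQ m (N ∘ Fin.rev) = mQ m N := Equiv.prod_comp Fin.revPerm N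
  have bijOn_rev : Set.BijOn (· ∘ Fin.rev) (Fintype.piFinset fun i => range (N i) : Set (Fin m → ℕ))
      (Fintype.piFinset fun i => range ((N ∘ Fin.rev) i)) := by
    have rev_rev (u : Fin m → ℕ) : (u ∘ Fin.rev) ∘ Fin.rev = u :=
      funext fun i => congrArg u i.rev_rev
    refine Set.InvOn.bijOn (f' := (· ∘ Fin.rev)) ⟨fun u _ => rev_rev u, fun u _ => rev_rev u⟩
      (fun u hu => ?_) fun u hu => ?_
    · simp only [mem_coe, Fintype.mem_piFinset] at hu ⊢
      exact fun i => hu i.rev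
    · simp only [mem_coe, Fintype.mem_piFinset] at hu ⊢
      exact fun i => by simpa using hu i.rev
  exact (mQ_rev ▸ (bijOn_mflatten (N ∘ Fin.rev)).comp bijOn_rev).congr
    fun u _ => (mrev_eq_mflatten_rev N u).symm

end MixedRadix

lemma bijOn_natCast_zmod (Q : ℕ) [NeZero Q] :
    Set.BijOn (Nat.cast : ℕ → ZMod Q) (range Q) Set.univ := by
  refine Set.InvOn.bijOn (f' := ZMod.val) ⟨fun a ha => ?_, fun a _ => ?_⟩ (Set.mapsTo_univ _ _)
    fun a _ => ?_
  · exact ZMod.val_cast_of_lt (mem_range.1 ha)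
  · exact ZMod.natCast_zmod_val a
  · exact mem_coe.2 (mem_range.2 a.val_lt)

lemma stdAddChar_natCast (Q n : ℕ) [NeZero Q] :
    ZMod.stdAddChar (n : ZMod Q) =
      Complex.exp (2 * Real.pi * Complex.I * ((n : ℝ) / (Q : ℝ) : ℝ)) := by
  rw [← Int.cast_natCast, ZMod.stdAddChar_coe]
  push_cast
  rw [mul_div_assoc]

section Skew

variable {m : ℕ} (N : Fin m → ℕ) [NeZero (mQ m N)]

lemma prod_lt_mul_prod_gt_div_mQ {i k : Fin m} (hik : i ≤ k) :
    (∏ j with j < i, (N j : ℝ)) * (∏ j with k < j, (N j : ℝ)) / mQ m N =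
      1 / (∏ j with i < j ∧ j ≤ k, (N j : ℝ)) / N i := by
  have hQ : (mQ m N : ℝ) ≠ 0 := NeZero.ne _
  have mQ_eq : (mQ m N : ℝ) = (∏ j with j < i, (N j : ℝ)) *
      (N i * ((∏ j with i < j ∧ j ≤ k, (N j : ℝ)) * ∏ j with k < j, (N j : ℝ))) := by
    rw [prod_lt_le_mul_prod_gt _ hik, prod_lt_mul_self_mul_prod_gt, mQ, Nat.cast_prod]
  rw [mQ_eq] at hQ ⊢
  simp only [mul_ne_zero_iff] at hQ
  obtain ⟨_, _, _, _⟩ := hQ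
  field_simp

lemma exists_prod_lt_mul_mrev_div_mQ_eq (u : Fin m → ℕ) (i : Fin m) :
    ∃ n : ℕ, (∏ j with j < i, (N j : ℝ)) * mrev m N u / mQ m N =
      n + ((u i : ℝ) + malpha m N u i) / N i := by
  obtain ⟨n, hn⟩ : mQ m N ∣
      ∑ k with k < i, u k * ((∏ j with j < i, N j) * ∏ j with k < j, N j) :=
    dvd_sum fun k hk => dvd_mul_of_dvd_right (prod_dvd_prod_lt_mul_prod_gt N (mem_filter.1 hk).2) _
  have hQ : (mQ m N : ℝ) ≠ 0 := NeZero.ne _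
  have lower_digits : ∑ k with k < i, (u k : ℝ) *
      ((∏ j with j < i, (N j : ℝ)) * (∏ j with k < j, (N j : ℝ)) / mQ m N) = n := by
    simp only [mul_div_assoc', ← sum_div]
    rw [div_eq_iff hQ, mul_comm (n : ℝ)]
    exact_mod_cast hn
  have own_digit : (u i : ℝ) *
      ((∏ j with j < i, (N j : ℝ)) * (∏ j with i < j, (N j : ℝ)) / mQ m N) = u i / N i := by
    rw [prod_lt_mul_prod_gt_div_mQ N le_rfl, filter_false_of_mem fun j _ h => h.1.not_ge h.2,
      prod_empty, one_div_one, mul_one_div]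
  have higher_digits : ∑ k with i < k, (u k : ℝ) *
      ((∏ j with j < i, (N j : ℝ)) * (∏ j with k < j, (N j : ℝ)) / mQ m N) =
      malpha m N u i / N i := by
    rw [malpha, sum_div]
    refine sum_congr rfl fun k hk => ?_
    rw [prod_lt_mul_prod_gt_div_mQ N (mem_filter.1 hk).2.le, mul_div_assoc', mul_one_div]
  refine ⟨n, ?_⟩
  calc (∏ j with j < i, (N j : ℝ)) * mrev m N u / mQ m N
    _ = ∑ k, (u k : ℝ) *
          ((∏ j with j < i, (N j : ℝ)) * (∏ j with k < j, (N j : ℝ)) / mQ m N) := by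
        simp only [mrev, Nat.cast_sum, Nat.cast_mul, Nat.cast_prod, mul_sum, sum_div]
        exact sum_congr rfl fun k _ => by ring
    _ = n + ((u i : ℝ) + malpha m N u i) / N i := by
        rw [← sum_lt_add_self_add_sum_gt _ i, lower_digits, own_digit, higher_digits, add_div]

lemma exists_mflatten_mul_mrev_div_mQ_eq (x u : Fin m → ℕ) :
    ∃ n : ℕ, ((mflatten m N x * mrev m N u : ℕ) : ℝ) / mQ m N =
      n + ∑ i, (x i : ℝ) * ((u i : ℝ) + malpha m N u i) / N i := by
  choose n hn using exists_prod_lt_mul_mrev_div_mQ_eq N u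
  refine ⟨∑ i, x i * n i, ?_⟩
  rw [mflatten]
  push_cast
  rw [sum_mul, sum_div, ← sum_add_distrib]
  refine sum_congr rfl fun i _ => ?_
  rw [mul_assoc, mul_div_assoc, hn i, mul_add, mul_div_assoc]

lemma exp_skew_phase_eq_stdAddChar (x u : Fin m → ℕ) :
    Complex.exp (-2 * Real.pi * Complex.I *
      ((∑ i, (x i : ℝ) * ((u i : ℝ) + malpha m N u i) / (N i : ℝ)) : ℝ)) =
    ZMod.stdAddChar (-(mflatten m N x * mrev m N u : ZMod (mQ m N))) := by
  obtain ⟨n, hn⟩ := exists_mflatten_mul_mrev_div_mQ_eq N x u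
  rw [AddChar.map_neg_eq_inv, ← Nat.cast_mul, stdAddChar_natCast, hn, ← Complex.exp_neg,
    Complex.exp_eq_exp_iff_exists_int]
  refine ⟨n, ?_⟩
  push_cast
  ring

lemma bijOn_mflatten_zmod :
    Set.BijOn (fun x => (mflatten m N x : ZMod (mQ m N)))
      (Fintype.piFinset fun i => range (N i)) Set.univ :=
  (bijOn_natCast_zmod _).comp (bijOn_mflatten N)

lemma sum_mrev_zmod {E : Type*} [AddCommMonoid E] (g : ZMod (mQ m N) → E) :
    ∑ u ∈ Fintype.piFinset fun i => range (N i), g (mrev m N u) = ∑ k, g k :=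
  have hbij := (bijOn_natCast_zmod (mQ m N)).comp (bijOn_mrev N)
  sum_nbij _ (fun _ _ => mem_univ _) hbij.injOn (by simpa using hbij.surjOn) fun _ _ => rfl

theorem mdft_skew_eq_dft (f : (Fin m → ℕ) → ℂ) (Φ : ZMod (mQ m N) → ℂ)
    (hΦ : ∀ y ∈ Fintype.piFinset fun i => range (N i), Φ (mflatten m N y) = f y)
    (u : Fin m → ℕ) :
    mdft m N f (fun i => (u i : ℝ) + malpha m N u i) = 𝓕 Φ (mrev m N u) := by
  have hbij := bijOn_mflatten_zmod N
  rw [mdft, ZMod.dft_apply]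
  refine sum_nbij _ (fun _ _ => mem_univ _) hbij.injOn (by simpa using hbij.surjOn) fun y hy => ?_
  rw [exp_skew_phase_eq_stdAddChar, hΦ y hy, smul_eq_mul]

end Skew

/-- Section 4, "Un-Orthogonality", multi-dimensional case: the 1-D
inverse DFT applied to the `m`-dimensional frequency data sampled on the properly
skewed grid `(u₁+α₁, …, u_m)` restores the spatial samples exactly. -/
theorem inverse_one_dim_dft_of_skewed_multi_dim_dft
    (m : ℕ) (hm : 1 ≤ m) (N : Fin m → ℕ) (hN : ∀ i, 0 < N i)
    (f : (Fin m → ℕ) → ℂ) (x : Fin m → ℕ) (hx : ∀ i, x i < N i) :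
    f x = (1 / (mQ m N : ℂ)) *
      ∑ u ∈ Fintype.piFinset (fun i => Finset.range (N i)),
        Complex.exp (2 * Real.pi * Complex.I *
            (((mflatten m N x * mrev m N u : ℕ) : ℝ) / (mQ m N : ℝ) : ℝ)) *
          mdft m N f (fun i => (u i : ℝ) + malpha m N u i) := by
  have : NeZero (mQ m N) := ⟨(prod_pos fun i _ => hN i).ne'⟩
  obtain ⟨Φ, hΦ⟩ : ∃ Φ : ZMod (mQ m N) → ℂ,
      ∀ y ∈ Fintype.piFinset fun i => range (N i), Φ (mflatten m N y) = f y :=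
    ⟨f ∘ Function.invFunOn _ _,
      fun _ hy => congrArg f ((bijOn_mflatten_zmod N).invOn_invFunOn.1 hy)⟩
  calc f x
    _ = 𝓕⁻ (𝓕 Φ) (mflatten m N x) := by
        rw [LinearEquiv.symm_apply_apply, hΦ x (by simpa using hx)]
    _ = (1 / (mQ m N : ℂ)) *
          ∑ k, ZMod.stdAddChar (mflatten m N x * k : ZMod (mQ m N)) * 𝓕 Φ k := by
        simp only [ZMod.invDFT_apply, smul_eq_mul, one_div,
          mul_comm (mflatten m N x : ZMod (mQ m N))]
    _ = _ := by
        rw [← sum_mrev_zmod]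
        simp only [mdft_skew_eq_dft N f Φ hΦ, ← Nat.cast_mul, stdAddChar_natCast]
end
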